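/- arXiv:1507.04073 — 2 statements merged into one kernel-verified Lean document; each statement's English description precedes it below -/
import Mathlib

section
/- Let A = [a_1, ..., a_n] ∈ ℝ^{m×n} with ‖a_i‖₂ = 1 for all i, and suppose 0 ∉ conv{a_1,...,a_n}, so that ρ(A) := max_{‖z‖₂=1} min_i ⟨a_i, z⟩ > 0. Then the von Neumann algorithm with away steps (as specified by the update rules: x_0 a vertex of Δ_{n−1}, y_k = A x_k, j minimizing ⟨a_i, y_k⟩, ℓ maximizing ⟨a_i, y_k⟩ over S(x_k), regular/away direction choice by comparing ⟨a_j − y_k, y_k⟩ and ⟨y_k − a_ℓ, y_k⟩, exact line search on [0, θ_max]) produces, within at most 8/ρ(A)² iterations, an index k with A^T y_k > 0 componentwise, certifying 0 ∉ conv(A). -/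
open scoped RealInnerProductSpace BigOperators

/-- `comb a x = A x`, the combination `∑ i, x i • a i` of the columns `a i` of `A`. -/
noncomputable def comb {m n : ℕ} (a : Fin n → EuclideanSpace ℝ (Fin m)) (x : Fin n → ℝ) :
    EuclideanSpace ℝ (Fin m) := ∑ i, x i • a i

/-- The relative width
`w(A) = min_{x ≥ 0, Ax ≠ 0} max {⟪Ax, a ℓ - a j⟫ / ‖Ax‖ : ℓ ∈ S(x), j ∈ {1,…,n}}`. -/
noncomputable def relWidth {m n : ℕ} (a : Fin n → EuclideanSpace ℝ (Fin m)) : ℝ :=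
  sInf {t : ℝ | ∃ x : Fin n → ℝ, (∀ i, 0 ≤ x i) ∧ comb a x ≠ 0 ∧
    t = sSup {s : ℝ | ∃ ℓ j : Fin n, 0 < x ℓ ∧
      s = ⟪comb a x, a ℓ - a j⟫ / ‖comb a x‖}}

/-- One iteration of the von Neumann algorithm with away steps, mapping `x k` to `x (k+1)`:
`j` minimizes `⟪a i, y k⟫`, `ℓ` maximizes `⟪a i, y k⟫` over the support of `x k`; a regular
step (`d = a j - y k`, `u = e j - x k`, `θmax = 1`) is taken when
`⟪a j - y k, y k⟫ < ⟪y k - a ℓ, y k⟫`, otherwise an away step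
(`d = y k - a ℓ`, `u = x k - e ℓ`, `θmax = (x k) ℓ / (1 - (x k) ℓ)`);
`θ` minimizes `‖y k + θ • d‖` over `[0, θmax]` and `x (k+1) = x k + θ • u`. -/
def VNAwayStep {m n : ℕ} (a : Fin n → EuclideanSpace ℝ (Fin m))
    (x x' : Fin n → ℝ) (y : EuclideanSpace ℝ (Fin m)) : Prop :=
  ∃ (j ℓ : Fin n) (d : EuclideanSpace ℝ (Fin m)) (u : Fin n → ℝ) (θmax θ : ℝ),
    (∀ i, ⟪a j, y⟫ ≤ ⟪a i, y⟫) ∧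
    0 < x ℓ ∧ (∀ i, 0 < x i → ⟪a i, y⟫ ≤ ⟪a ℓ, y⟫) ∧
    ((⟪a j - y, y⟫ < ⟪y - a ℓ, y⟫ ∧
        d = a j - y ∧ u = Pi.single j 1 - x ∧ θmax = 1) ∨
     (¬ (⟪a j - y, y⟫ < ⟪y - a ℓ, y⟫) ∧
        d = y - a ℓ ∧ u = x - Pi.single ℓ 1 ∧ θmax = x ℓ / (1 - x ℓ))) ∧
    0 ≤ θ ∧ θ ≤ θmax ∧
    (∀ θ' : ℝ, 0 ≤ θ' → θ' ≤ θmax → ‖y + θ • d‖ ≤ ‖y + θ' • d‖) ∧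
    x' = x + θ • u

/- Let `y = A x` with `x` in the simplex, and suppose some `⟪a i, y⟫ ≤ 0`. Both search directions
then satisfy `⟪d, y⟫ ≤ -‖y‖²` and `‖d‖ ≤ 2R`, where `R` bounds the norms of the columns, so an
unconstrained line search lowers `w = ‖y‖²` by at least `w² / (4R²)`, and the step adds at most one
index to the support. Only an away step can be cut short by `θmax`; it then removes an index from
the support and does not increase `w`. In both cases `8R² / w` grows at least as much as
`k + #S(x k)`. A vector `z` in the unit ball with `⟪a i, z⟫ ≥ ρ` for all `i` forces `w ≥ ρ²`, which
bounds the number of iterations. -/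

section LineSearch

variable {E : Type*} [NormedAddCommGroup E] [InnerProductSpace ℝ E] {y d : E} {θ T R : ℝ}

lemma norm_add_smul_sq (y d : E) (t : ℝ) :
    ‖y + t • d‖ ^ 2 = ‖y‖ ^ 2 + 2 * t * ⟪d, y⟫ + t ^ 2 * ‖d‖ ^ 2 := by
  rw [norm_add_sq_real, inner_smul_right, norm_smul, mul_pow, Real.norm_eq_abs, sq_abs,
    real_inner_comm]
  ring

lemma norm_sq_le_of_isMinOn (hmin : IsMinOn (fun t : ℝ => ‖y + t • d‖) (Set.Icc 0 T) θ)
    (hT : 0 ≤ T) : ‖y + θ • d‖ ^ 2 ≤ ‖y‖ ^ 2 := by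
  have h : ‖y + θ • d‖ ≤ ‖y + (0 : ℝ) • d‖ := isMinOn_iff.1 hmin 0 ⟨le_rfl, hT⟩
  rw [zero_smul, add_zero] at h
  gcongr

lemma sq_inner_le_of_isMinOn (hmin : IsMinOn (fun t : ℝ => ‖y + t • d‖) (Set.Icc 0 T) θ)
    (hdy : ⟪d, y⟫ ≤ 0) (hT : -⟪d, y⟫ ≤ T * ‖d‖ ^ 2) :
    ⟪d, y⟫ ^ 2 ≤ ‖d‖ ^ 2 * (‖y‖ ^ 2 - ‖y + θ • d‖ ^ 2) := by
  rcases eq_or_ne d 0 with rfl | hd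
  · simp
  have hd2 : 0 < ‖d‖ ^ 2 := by positivity
  -- The unconstrained minimizer of `t ↦ ‖y + t • d‖`.
  set t := -⟪d, y⟫ / ‖d‖ ^ 2
  have hmem : t ∈ Set.Icc 0 T := ⟨div_nonneg (by linarith) hd2.le, (div_le_iff₀ hd2).2 hT⟩
  have hle : ‖y + θ • d‖ ^ 2 ≤ ‖y + t • d‖ ^ 2 := by
    gcongr
    exact isMinOn_iff.1 hmin t hmem
  have hmul : t * ‖d‖ ^ 2 = -⟪d, y⟫ := div_mul_cancel₀ _ hd2.ne'
  calc ⟪d, y⟫ ^ 2 = ‖d‖ ^ 2 * (‖y‖ ^ 2 - ‖y + t • d‖ ^ 2) := by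
        rw [norm_add_smul_sq]
        linear_combination (t * ‖d‖ ^ 2 + ⟪d, y⟫) * hmul
    _ ≤ ‖d‖ ^ 2 * (‖y‖ ^ 2 - ‖y + θ • d‖ ^ 2) := by gcongr

lemma norm_pow_four_le_of_isMinOn (hmin : IsMinOn (fun t : ℝ => ‖y + t • d‖) (Set.Icc 0 T) θ)
    (hT0 : 0 ≤ T) (hdy : ⟪d, y⟫ ≤ -‖y‖ ^ 2) (hT : -⟪d, y⟫ ≤ T * ‖d‖ ^ 2) (hd : ‖d‖ ≤ 2 * R) :
    ‖y‖ ^ 4 ≤ 4 * R ^ 2 * (‖y‖ ^ 2 - ‖y + θ • d‖ ^ 2) := by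
  have hy2 : 0 ≤ ‖y‖ ^ 2 := sq_nonneg _
  have hdecr : 0 ≤ ‖y‖ ^ 2 - ‖y + θ • d‖ ^ 2 := sub_nonneg.2 (norm_sq_le_of_isMinOn hmin hT0)
  calc ‖y‖ ^ 4 = (‖y‖ ^ 2) ^ 2 := by ring
    _ ≤ (-⟪d, y⟫) ^ 2 := by gcongr; linarith
    _ = ⟪d, y⟫ ^ 2 := neg_sq _
    _ ≤ ‖d‖ ^ 2 * (‖y‖ ^ 2 - ‖y + θ • d‖ ^ 2) := sq_inner_le_of_isMinOn hmin (by linarith) hT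
    _ ≤ (2 * R) ^ 2 * (‖y‖ ^ 2 - ‖y + θ • d‖ ^ 2) := by gcongr
    _ = 4 * R ^ 2 * (‖y‖ ^ 2 - ‖y + θ • d‖ ^ 2) := by ring

lemma eq_right_of_isMinOn (hmin : IsMinOn (fun t : ℝ => ‖y + t • d‖) (Set.Icc 0 T) θ)
    (hθ : θ ∈ Set.Icc 0 T) (hT : T * ‖d‖ ^ 2 < -⟪d, y⟫) : θ = T := by
  refine le_antisymm hθ.2 (not_lt.1 fun hlt => ?_)
  have hle : ‖y + θ • d‖ ^ 2 ≤ ‖y + T • d‖ ^ 2 := by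
    gcongr
    exact isMinOn_iff.1 hmin T ⟨hθ.1.trans hθ.2, le_rfl⟩
  rw [norm_add_smul_sq, norm_add_smul_sq] at hle
  have hsum : (T + θ) * ‖d‖ ^ 2 ≤ 2 * (T * ‖d‖ ^ 2) := by nlinarith [sq_nonneg ‖d‖]
  have hneg : (T - θ) * (2 * ⟪d, y⟫ + (T + θ) * ‖d‖ ^ 2) < 0 :=
    mul_neg_of_pos_of_neg (by linarith) (by linarith)
  linarith

end LineSearch

section Simplex

variable {ι : Type*} [Fintype ι] {x : ι → ℝ}

/-- The support `S(x) = {i | 0 < x i}` of a nonnegative vector, as a finset; negative entries do not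
count. -/
noncomputable def posSupport (x : ι → ℝ) : Finset ι :=
  Finset.univ.filter fun i => 0 < x i

lemma mem_posSupport {i : ι} : i ∈ posSupport x ↔ 0 < x i := by
  simp [posSupport]

lemma posSupport_nonempty_of_mem_stdSimplex (hx : x ∈ stdSimplex ℝ ι) :
    (posSupport x).Nonempty := by
  have hsum : ∑ _i : ι, (0 : ℝ) < ∑ i, x i := by simp [hx.2]
  obtain ⟨i, -, hi⟩ := Finset.exists_lt_of_sum_lt hsum
  exact ⟨i, mem_posSupport.2 hi⟩

variable [DecidableEq ι] {θ : ℝ} {l : ι}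

lemma posSupport_single (i : ι) : posSupport (Pi.single i (1 : ℝ)) = {i} := by
  ext j
  rcases eq_or_ne j i with rfl | hj <;> simp [mem_posSupport, *]

lemma eq_single_of_mem_stdSimplex (hx : x ∈ stdSimplex ℝ ι) (hl : x l = 1) :
    x = Pi.single l 1 := by
  have hrest : ∑ i ∈ Finset.univ.erase l, x i = 0 := by
    linarith [Finset.add_sum_erase Finset.univ x (Finset.mem_univ l), hx.2]
  ext i
  rcases eq_or_ne i l with rfl | hi
  · simpa using hl
  · rw [Pi.single_eq_of_ne hi]
    exact (Finset.sum_eq_zero_iff_of_nonneg fun i _ => hx.1 i).1 hrest i (by simp [hi])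

lemma posSupport_add_smul_single_sub_subset (hx : ∀ i, 0 ≤ x i) (θ : ℝ) (j : ι) :
    posSupport (x + θ • (Pi.single j 1 - x)) ⊆ insert j (posSupport x) := by
  intro i hi
  rw [Finset.mem_insert, mem_posSupport, or_iff_not_imp_left]
  refine fun hij => (hx i).lt_of_ne' fun hxi => ?_
  simp [mem_posSupport, hij, hxi] at hi

lemma add_smul_sub_single_mem_stdSimplex (hx : x ∈ stdSimplex ℝ ι) (hθ : 0 ≤ θ)
    (hl : θ * (1 - x l) ≤ x l) : x + θ • (x - Pi.single l 1) ∈ stdSimplex ℝ ι := by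
  refine ⟨fun i => ?_, ?_⟩
  · have hi := hx.1 i
    simp only [Pi.add_apply, Pi.smul_apply, Pi.sub_apply, smul_eq_mul]
    rcases eq_or_ne i l with rfl | hil
    · rw [Pi.single_eq_same]
      linarith
    · rw [Pi.single_eq_of_ne hil, sub_zero]
      positivity
  · simp [Finset.sum_add_distrib, ← Finset.mul_sum, Finset.sum_sub_distrib, hx.2]

lemma posSupport_add_smul_sub_single_subset (hx : ∀ i, 0 ≤ x i) (hl : 0 < x l) (θ : ℝ) :
    posSupport (x + θ • (x - Pi.single l 1)) ⊆ posSupport x := by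
  intro i hi
  rw [mem_posSupport]
  refine (hx i).lt_of_ne' fun hxi => ?_
  have hil : i ≠ l := by
    rintro rfl
    exact hl.ne' hxi
  simp [mem_posSupport, hil, hxi] at hi

lemma posSupport_add_smul_sub_single_ssubset (hx : ∀ i, 0 ≤ x i) (hl : 0 < x l)
    (hθ : θ * (1 - x l) = x l) :
    posSupport (x + θ • (x - Pi.single l 1)) ⊂ posSupport x := by
  refine (Finset.ssubset_iff_of_subset (posSupport_add_smul_sub_single_subset hx hl θ)).2
    ⟨l, mem_posSupport.2 hl, fun hmem => ?_⟩
  have hpos : 0 < x l + θ * (x l - 1) := by simpa using mem_posSupport.1 hmem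
  linarith

end Simplex

section ConditionMeasure

variable {E : Type*} [NormedAddCommGroup E] [InnerProductSpace ℝ E]

lemma exists_mem_forall_inner_pos {K : Set E} (hne : K.Nonempty) (hK : IsComplete K)
    (hconv : Convex ℝ K) (h0 : (0 : E) ∉ K) : ∃ p ∈ K, ∀ v ∈ K, 0 < ⟪v, p⟫ := by
  obtain ⟨p, hp, hpmin⟩ := exists_norm_eq_iInf_of_complete_convex hne hK hconv 0
  refine ⟨p, hp, fun v hv => ?_⟩
  have hproj : ⟪0 - p, v - p⟫ ≤ 0 := (norm_eq_iInf_iff_real_inner_le_zero hconv hp).1 hpmin v hv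
  rw [zero_sub, inner_neg_left, inner_sub_right, real_inner_self_eq_norm_sq,
    real_inner_comm] at hproj
  have hpos : 0 < ‖p‖ := norm_pos_iff.2 (ne_of_mem_of_not_mem hp h0)
  linarith [pow_pos hpos 2]

lemma exists_norm_eq_one_forall_inner_pos {ι : Type*} [Finite ι] [Nonempty ι] {a : ι → E}
    (h0 : (0 : E) ∉ convexHull ℝ (Set.range a)) : ∃ z : E, ‖z‖ = 1 ∧ ∀ i, 0 < ⟪a i, z⟫ := by
  obtain ⟨p, hp, hpos⟩ := exists_mem_forall_inner_pos (Set.range_nonempty a).convexHull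
    ((Set.finite_range a).isCompact_convexHull ℝ).isComplete (convex_convexHull ℝ _) h0
  have hp0 : p ≠ 0 := ne_of_mem_of_not_mem hp h0
  refine ⟨‖p‖⁻¹ • p, norm_smul_inv_norm (𝕜 := ℝ) hp0, fun i => ?_⟩
  rw [inner_smul_right]
  exact mul_pos (by positivity) (hpos _ (subset_convexHull ℝ _ ⟨i, rfl⟩))

lemma pos_and_exists_le_inner_of_isGreatest {ι : Type*} [Finite ι] [Nonempty ι] {a : ι → E}
    {ρ : ℝ} (h0 : (0 : E) ∉ convexHull ℝ (Set.range a))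
    (hρ : IsGreatest {t : ℝ | ∃ z : E, ‖z‖ = 1 ∧ t = ⨅ i, ⟪a i, z⟫} ρ) :
    0 < ρ ∧ ∃ z : E, ‖z‖ = 1 ∧ ∀ i, ρ ≤ ⟪a i, z⟫ := by
  constructor
  · obtain ⟨w, hw, hpos⟩ := exists_norm_eq_one_forall_inner_pos h0
    obtain ⟨i, hi⟩ := exists_eq_ciInf_of_finite (f := fun i => ⟪a i, w⟫)
    exact (hi ▸ hpos i).trans_le (hρ.2 ⟨w, hw, rfl⟩)
  · obtain ⟨z, hz, rfl⟩ := hρ.1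
    exact ⟨z, hz, fun i => ciInf_le (Set.finite_range _).bddBelow i⟩

end ConditionMeasure

section Step

variable {m n : ℕ} {a : Fin n → EuclideanSpace ℝ (Fin m)} {x x' : Fin n → ℝ}
  {y : EuclideanSpace ℝ (Fin m)} {R : ℝ}

lemma comb_eq_linearCombination (a : Fin n → EuclideanSpace ℝ (Fin m)) (x : Fin n → ℝ) :
    comb a x = Fintype.linearCombination ℝ a x := rfl

lemma comb_single (a : Fin n → EuclideanSpace ℝ (Fin m)) (i : Fin n) :
    comb a (Pi.single i 1) = a i := by
  simp [comb_eq_linearCombination]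

lemma comb_add_smul_sub (a : Fin n → EuclideanSpace ℝ (Fin m)) (x u v : Fin n → ℝ) (θ : ℝ) :
    comb a (x + θ • (u - v)) = comb a x + θ • (comb a u - comb a v) := by
  simp only [comb_eq_linearCombination, map_add, map_smul, map_sub]

lemma comb_mem {K : Set (EuclideanSpace ℝ (Fin m))} (hK : Convex ℝ K) (ha : ∀ i, a i ∈ K)
    (hx : x ∈ stdSimplex ℝ (Fin n)) : comb a x ∈ K :=
  hK.sum_mem (fun i _ => hx.1 i) hx.2 fun i _ => ha i

lemma norm_comb_le (hR : ∀ i, ‖a i‖ ≤ R) (hx : x ∈ stdSimplex ℝ (Fin n)) : ‖comb a x‖ ≤ R :=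
  mem_closedBall_zero_iff.1 <|
    comb_mem (convex_closedBall 0 R) (fun i => mem_closedBall_zero_iff.2 (hR i)) hx

lemma le_norm_comb {ρ : ℝ} {z : EuclideanSpace ℝ (Fin m)} (hz : ‖z‖ ≤ 1)
    (hρ : ∀ i, ρ ≤ ⟪a i, z⟫) (hx : x ∈ stdSimplex ℝ (Fin n)) : ρ ≤ ‖comb a x‖ := by
  have hconv : Convex ℝ {v : EuclideanSpace ℝ (Fin m) | ρ ≤ ⟪v, z⟫} :=
    convex_halfSpace_ge ⟨fun u v => inner_add_left u v z, fun c v => real_inner_smul_left v z c⟩ ρ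
  calc ρ ≤ ⟪comb a x, z⟫ := comb_mem hconv hρ hx
    _ ≤ ‖comb a x‖ * ‖z‖ := real_inner_le_norm _ _
    _ ≤ ‖comb a x‖ := mul_le_of_le_one_right (norm_nonneg _) hz

lemma VNAwayStep.mem_stdSimplex (h : VNAwayStep a x x' y) (hx : x ∈ stdSimplex ℝ (Fin n)) :
    x' ∈ stdSimplex ℝ (Fin n) := by
  obtain ⟨j, l, d, u, T, θ, -, -, -, hdir, hθ0, hθT, -, rfl⟩ := h
  rcases hdir with ⟨-, -, rfl, rfl⟩ | ⟨-, -, rfl, rfl⟩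
  · exact (convex_stdSimplex ℝ _).add_smul_sub_mem hx (single_mem_stdSimplex ℝ j) ⟨hθ0, hθT⟩
  · have hl := mem_Icc_of_mem_stdSimplex hx l
    -- At a vertex `x l = 1` the bound `θmax = 1 / 0` is `0`, and the argument still applies.
    exact add_smul_sub_single_mem_stdSimplex hx hθ0
      (mul_le_of_le_div₀ hl.1 (sub_nonneg.2 hl.2) hθT)

lemma regular_step_descent {j : Fin n} {θ : ℝ} (hR : ∀ i, ‖a i‖ ≤ R)
    (hx : x ∈ stdSimplex ℝ (Fin n)) (hj : ⟪a j, comb a x⟫ ≤ 0)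
    (hmin : IsMinOn (fun t : ℝ => ‖comb a x + t • (a j - comb a x)‖) (Set.Icc 0 1) θ) :
    (posSupport (x + θ • (Pi.single j 1 - x))).card ≤ (posSupport x).card + 1 ∧
      ‖comb a x‖ ^ 4 ≤
        4 * R ^ 2 * (‖comb a x‖ ^ 2 - ‖comb a (x + θ • (Pi.single j 1 - x))‖ ^ 2) := by
  refine ⟨(Finset.card_le_card (posSupport_add_smul_single_sub_subset hx.1 θ j)).trans
    (Finset.card_insert_le _ _), ?_⟩
  rw [comb_add_smul_sub, comb_single]
  have hy := norm_comb_le hR hx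
  set y := comb a x
  have hdy : ⟪a j - y, y⟫ = ⟪a j, y⟫ - ‖y‖ ^ 2 := by
    rw [inner_sub_left, real_inner_self_eq_norm_sq]
  have hd : ‖a j - y‖ ≤ 2 * R := by linarith [norm_sub_le (a j) y, hR j]
  refine norm_pow_four_le_of_isMinOn hmin zero_le_one (by linarith) ?_ hd
  rw [hdy, norm_sub_sq_real]
  linarith [sq_nonneg ‖a j‖]

lemma away_step_descent_or_drop {l : Fin n} {θ : ℝ} (hR : ∀ i, ‖a i‖ ≤ R)
    (hx : x ∈ stdSimplex ℝ (Fin n)) (hl : 0 < x l)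
    (hdy : ⟪comb a x - a l, comb a x⟫ ≤ -‖comb a x‖ ^ 2)
    (hθ : θ ∈ Set.Icc 0 (x l / (1 - x l)))
    (hmin : IsMinOn (fun t : ℝ => ‖comb a x + t • (comb a x - a l)‖)
      (Set.Icc 0 (x l / (1 - x l))) θ) :
    ((posSupport (x + θ • (x - Pi.single l 1))).card ≤ (posSupport x).card + 1 ∧
      ‖comb a x‖ ^ 4 ≤
        4 * R ^ 2 * (‖comb a x‖ ^ 2 - ‖comb a (x + θ • (x - Pi.single l 1))‖ ^ 2)) ∨
    ((posSupport (x + θ • (x - Pi.single l 1))).card < (posSupport x).card ∧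
      ‖comb a (x + θ • (x - Pi.single l 1))‖ ^ 2 ≤ ‖comb a x‖ ^ 2) := by
  have hT := hθ.1.trans hθ.2
  have hcomb : comb a (x + θ • (x - Pi.single l 1)) = comb a x + θ • (comb a x - a l) := by
    rw [comb_add_smul_sub, comb_single]
  rw [hcomb]
  rcases le_or_gt (-⟪comb a x - a l, comb a x⟫) (x l / (1 - x l) * ‖comb a x - a l‖ ^ 2)
    with hfull | hdrop
  · refine .inl ⟨?_, norm_pow_four_le_of_isMinOn hmin hT hdy hfull ?_⟩
    · exact (Finset.card_le_card (posSupport_add_smul_sub_single_subset hx.1 hl θ)).trans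
        (Nat.le_succ _)
    · linarith [norm_sub_le (comb a x) (a l), hR l, norm_comb_le hR hx]
  · refine .inr ⟨?_, norm_sq_le_of_isMinOn hmin hT⟩
    have hl1 : x l ≠ 1 := fun h => by
      rw [eq_single_of_mem_stdSimplex hx h, comb_single] at hdrop
      simp at hdrop
    refine Finset.card_lt_card (posSupport_add_smul_sub_single_ssubset hx.1 hl ?_)
    rw [eq_right_of_isMinOn hmin hθ hdrop]
    exact div_mul_cancel₀ _ (sub_ne_zero.2 hl1.symm)

lemma VNAwayStep.descent_or_drop (h : VNAwayStep a x x' (comb a x)) (hR : ∀ i, ‖a i‖ ≤ R)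
    (hx : x ∈ stdSimplex ℝ (Fin n)) (hneg : ∃ i, ⟪a i, comb a x⟫ ≤ 0) :
    ((posSupport x').card ≤ (posSupport x).card + 1 ∧
      ‖comb a x‖ ^ 4 ≤ 4 * R ^ 2 * (‖comb a x‖ ^ 2 - ‖comb a x'‖ ^ 2)) ∨
    ((posSupport x').card < (posSupport x).card ∧ ‖comb a x'‖ ^ 2 ≤ ‖comb a x‖ ^ 2) := by
  obtain ⟨j, l, d, u, T, θ, hj, hl, -, hdir, hθ0, hθT, hmin, rfl⟩ := h
  obtain ⟨i, hi⟩ := hneg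
  have hj0 : ⟪a j, comb a x⟫ ≤ 0 := (hj i).trans hi
  have hmin' : IsMinOn (fun t : ℝ => ‖comb a x + t • d‖) (Set.Icc 0 T) θ :=
    isMinOn_iff.2 fun t ht => hmin t ht.1 ht.2
  rcases hdir with ⟨-, rfl, rfl, rfl⟩ | ⟨haway, rfl, rfl, rfl⟩
  · exact .inl (regular_step_descent hR hx hj0 hmin')
  · have hdj : ⟪a j - comb a x, comb a x⟫ = ⟪a j, comb a x⟫ - ‖comb a x‖ ^ 2 := by
      rw [inner_sub_left, real_inner_self_eq_norm_sq]
    exact away_step_descent_or_drop hR hx hl (by linarith) ⟨hθ0, hθT⟩ hmin'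

end Step

section Recurrence

variable {𝕜 : Type*} [CommRing 𝕜] [LinearOrder 𝕜] [IsStrictOrderedRing 𝕜]

-- In terms of `1 / w`: the hypothesis `h` gives `1 / w' ≥ 1 / w + 1 / M`.
lemma mul_add_one_le_of_sq_le {M w w' c : 𝕜} (hM : 0 < M) (hw' : 0 ≤ w')
    (h : w ^ 2 ≤ M * (w - w')) (hc : w * c ≤ M) : w' * (c + 1) ≤ M := by
  rcases le_or_gt (c + 1) 0 with hc1 | hc1
  · exact (mul_nonpos_of_nonneg_of_nonpos hw' hc1).trans hM.le
  have hwM : w ≤ M := by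
    by_contra! hlt
    nlinarith [mul_nonneg hM.le hw']
  refine le_of_mul_le_mul_left ?_ hM
  calc M * (w' * (c + 1)) = M * w' * (c + 1) := by ring
    _ ≤ (M * w - w ^ 2) * (c + 1) := by gcongr; linarith
    _ = (M - w) * (w * c + w) := by ring
    _ ≤ (M - w) * (M + w) := by gcongr
    _ = M * M - w ^ 2 := by ring
    _ ≤ M * M := sub_le_self _ (sq_nonneg w)

lemma mul_le_of_le_of_le_of_mul_le {B w w' c c' : 𝕜} (hB : 0 ≤ B) (hw' : 0 ≤ w') (hww' : w' ≤ w)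
    (hcc' : c' ≤ c) (hc : w * c ≤ B) : w' * c' ≤ B := by
  rcases le_total c' 0 with hc' | hc'
  · exact (mul_nonpos_of_nonneg_of_nonpos hw' hc').trans hB
  · exact (mul_le_mul hww' hcc' hc' (hw'.trans hww')).trans hc

end Recurrence

section Iterates

variable {m n : ℕ} {a : Fin n → EuclideanSpace ℝ (Fin m)} {x : ℕ → Fin n → ℝ} {R : ℝ}

lemma iterate_mem_stdSimplex (hx0 : x 0 ∈ stdSimplex ℝ (Fin n))
    (hstep : ∀ k, VNAwayStep a (x k) (x (k + 1)) (comb a (x k))) (k : ℕ) :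
    x k ∈ stdSimplex ℝ (Fin n) := by
  induction k with
  | zero => exact hx0
  | succ k ih => exact (hstep k).mem_stdSimplex ih

lemma iterate_norm_sq_mul_le (hR0 : 0 < R) (hR : ∀ i, ‖a i‖ ≤ R)
    (hx0 : x 0 ∈ stdSimplex ℝ (Fin n))
    (hstep : ∀ k, VNAwayStep a (x k) (x (k + 1)) (comb a (x k))) (k : ℕ)
    (hneg : ∀ i < k, ∃ j, ⟪a j, comb a (x i)⟫ ≤ 0) :
    ‖comb a (x k)‖ ^ 2 * (k + (posSupport (x k)).card + 8 - (posSupport (x 0)).card)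
      ≤ 8 * R ^ 2 := by
  have hmem := iterate_mem_stdSimplex hx0 hstep
  induction k with
  | zero =>
    have hy : ‖comb a (x 0)‖ ^ 2 ≤ R ^ 2 := by
      gcongr
      exact norm_comb_le hR (hmem 0)
    push_cast
    linarith
  | succ k ih =>
    specialize ih fun i hi => hneg i (by lia)
    rcases (hstep k).descent_or_drop hR (hmem k) (hneg k k.lt_succ_self) with
      ⟨hcard, hdesc⟩ | ⟨hcard, hdesc⟩
    · have hcard' : ((posSupport (x (k + 1))).card : ℝ) ≤ (posSupport (x k)).card + 1 := by
        exact_mod_cast hcard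
      have hgood := mul_add_one_le_of_sq_le (M := 4 * R ^ 2) (w := ‖comb a (x k)‖ ^ 2)
        (c := (k + (posSupport (x k)).card + 8 - (posSupport (x 0)).card) / 2)
        (by positivity) (sq_nonneg ‖comb a (x (k + 1))‖) (by linarith) (by linarith)
      have hgood' : ‖comb a (x (k + 1))‖ ^ 2 *
          (k + (posSupport (x k)).card + 8 - (posSupport (x 0)).card + 2) ≤ 8 * R ^ 2 := by
        linarith
      refine mul_le_of_le_of_le_of_mul_le (by positivity) (sq_nonneg _) le_rfl ?_ hgood'
      push_cast
      linarith
    · have hcard' : ((posSupport (x (k + 1))).card : ℝ) + 1 ≤ (posSupport (x k)).card := by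
        exact_mod_cast hcard
      refine mul_le_of_le_of_le_of_mul_le (by positivity) (sq_nonneg _) hdesc ?_ ih
      push_cast
      linarith

lemma iteration_count_le {ρ : ℝ} {z : EuclideanSpace ℝ (Fin m)} (hR : ∀ i, ‖a i‖ ≤ R) (hρ : 0 < ρ)
    (hz : ‖z‖ ≤ 1) (hρz : ∀ i, ρ ≤ ⟪a i, z⟫) (hx0 : x 0 ∈ stdSimplex ℝ (Fin n))
    (hstep : ∀ k, VNAwayStep a (x k) (x (k + 1)) (comb a (x k))) (k : ℕ)
    (hneg : ∀ i < k, ∃ j, ⟪a j, comb a (x i)⟫ ≤ 0) :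
    (k : ℝ) ≤ 8 * R ^ 2 / ρ ^ 2 + (posSupport (x 0)).card - 9 := by
  have hxk := iterate_mem_stdSimplex hx0 hstep k
  have hlow : ρ ≤ ‖comb a (x k)‖ := le_norm_comb hz hρz hxk
  have hR0 : 0 < R := hρ.trans_le (hlow.trans (norm_comb_le hR hxk))
  have hcard : (1 : ℝ) ≤ (posSupport (x k)).card := by
    exact_mod_cast (posSupport_nonempty_of_mem_stdSimplex hxk).card_pos
  have hinv : (k + (posSupport (x k)).card + 8 - (posSupport (x 0)).card : ℝ)
      ≤ 8 * R ^ 2 / ρ ^ 2 := by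
    rw [le_div_iff₀' (by positivity)]
    exact mul_le_of_le_of_le_of_mul_le (by positivity) (by positivity) (by gcongr) le_rfl
      (iterate_norm_sq_mul_le hR0 hR hx0 hstep k hneg)
  linarith

end Iterates

theorem stmt7_general {m n : ℕ} {a : Fin n → EuclideanSpace ℝ (Fin m)} {R ρ : ℝ}
    {z : EuclideanSpace ℝ (Fin m)} {x : ℕ → Fin n → ℝ} (hR : ∀ i, ‖a i‖ ≤ R) (hρ : 0 < ρ)
    (hz : ‖z‖ ≤ 1) (hρz : ∀ i, ρ ≤ ⟪a i, z⟫) (hx0 : x 0 ∈ stdSimplex ℝ (Fin n))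
    (hstep : ∀ k, VNAwayStep a (x k) (x (k + 1)) (comb a (x k))) :
    ∃ k : ℕ, (k : ℝ) ≤ 8 * R ^ 2 / ρ ^ 2 + (posSupport (x 0)).card - 9 ∧
      ∀ i, 0 < ⟪a i, comb a (x k)⟫ := by
  have hbound := iteration_count_le hR hρ hz hρz hx0 hstep
  have hex : ∃ k, ∀ i, 0 < ⟪a i, comb a (x k)⟫ := by
    by_contra! hnone
    obtain ⟨k, hk⟩ := exists_nat_gt (8 * R ^ 2 / ρ ^ 2 + (posSupport (x 0)).card - 9)
    exact hk.not_ge (hbound k fun i _ => hnone i)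
  classical
  exact ⟨Nat.find hex, hbound _ fun i hi => by simpa using Nat.find_min hex hi,
    Nat.find_spec hex⟩

/-- if `0 ∉ conv(A)` (so that `ρ(A) > 0`), the von Neumann algorithm with
away steps finds, within at most `8/ρ(A)²` iterations, an iterate `y k` with
`Aᵀ y k > 0` componentwise, certifying `0 ∉ conv(A)`. -/
theorem stmt7 (m n : ℕ) (hn : 0 < n) (a : Fin n → EuclideanSpace ℝ (Fin m))
    (hnorm : ∀ i, ‖a i‖ = 1)
    (h0 : (0 : EuclideanSpace ℝ (Fin m)) ∉ convexHull ℝ (Set.range a)) (ρ : ℝ)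
    (hρ : IsGreatest
      {t : ℝ | ∃ z : EuclideanSpace ℝ (Fin m), ‖z‖ = 1 ∧ t = ⨅ i : Fin n, ⟪a i, z⟫} ρ)
    (x : ℕ → Fin n → ℝ) (y : ℕ → EuclideanSpace ℝ (Fin m))
    (hy : ∀ k, y k = comb a (x k))
    (hx0 : ∃ i : Fin n, x 0 = Pi.single i 1)
    (hstep : ∀ k : ℕ, VNAwayStep a (x k) (x (k + 1)) (y k)) :
    ∃ k : ℕ, (k : ℝ) ≤ 8 / ρ ^ 2 ∧ ∀ i : Fin n, 0 < ⟪a i, y k⟫ := by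
  have : Nonempty (Fin n) := Fin.pos_iff_nonempty.1 hn
  obtain rfl : y = fun k => comb a (x k) := funext hy
  obtain ⟨i, hi⟩ := hx0
  obtain ⟨hρ0, z, hz, hρz⟩ := pos_and_exists_le_inner_of_isGreatest h0 hρ
  obtain ⟨k, hk, hcert⟩ := stmt7_general (fun i => (hnorm i).le) hρ0 hz.le hρz
    (hi ▸ single_mem_stdSimplex ℝ i) hstep
  norm_num [hi, posSupport_single] at hk
  exact ⟨k, by linarith, hcert⟩
end

section
/- Let A = [a_1, ..., a_n] ∈ ℝ^{m×n} be nonzero with 0 in the interior of conv{a_1,...,a_n}. Then for every x ≥ 0 with Ax ≠ 0, φ(A, x) ≥ |ρ(A)| + ‖Ax‖₂/‖x‖₁, and consequently φ(A) ≥ |ρ(A)|. -/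
open scoped RealInnerProductSpace BigOperators

/-- `φ(A, x) = sup {λ > 0 : ∃ u v ∈ Δ_{n-1}, S(u) ⊆ S(x), Au - Av = (λ/‖Ax‖) Ax}`. -/
noncomputable def phiAt {m n : ℕ} (a : Fin n → EuclideanSpace ℝ (Fin m))
    (x : Fin n → ℝ) : ℝ :=
  sSup {lam : ℝ | 0 < lam ∧ ∃ u ∈ stdSimplex ℝ (Fin n), ∃ v ∈ stdSimplex ℝ (Fin n),
    (∀ i, 0 < u i → 0 < x i) ∧
    comb a u - comb a v = (lam / ‖comb a x‖) • comb a x}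

/-- The restricted width `φ(A) = min {φ(A, x) : x ≥ 0, Ax ≠ 0}`. -/
noncomputable def phi {m n : ℕ} (a : Fin n → EuclideanSpace ℝ (Fin m)) : ℝ :=
  sInf {t : ℝ | ∃ x : Fin n → ℝ, (∀ i, 0 ≤ x i) ∧ comb a x ≠ 0 ∧ t = phiAt a x}

/-!
Since `0` lies in the hull, `ρ = ρ(A) ≤ 0`, and by separation the closed ball of radius `|ρ|` around
`0` lies in `conv {a₁, …, aₙ}`: a point `p` outside the hull admits a direction `z` with
`⟪p, z⟫ < ⟪a i, z⟫` for all `i`, while some `⟪a i, z⟫` is at most `ρ ‖z‖`, so that `‖p‖ > |ρ|`.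
Hence `-|ρ| Ax / ‖Ax‖ = Av` for some `v` in the simplex, and with `u = x / ‖x‖₁` the difference
`Au - Av` equals `(|ρ| + ‖Ax‖ / ‖x‖₁) Ax / ‖Ax‖`.
-/

lemma inv_sum_smul_mem_stdSimplex {ι 𝕜 : Type*} [Fintype ι] [Field 𝕜] [LinearOrder 𝕜]
    [IsStrictOrderedRing 𝕜] {x : ι → 𝕜} (hx : ∀ i, 0 ≤ x i) (hsum : ∑ i, x i ≠ 0) :
    (∑ i, x i)⁻¹ • x ∈ stdSimplex 𝕜 ι := by
  refine ⟨fun i ↦ mul_nonneg (inv_nonneg.2 (Fintype.sum_nonneg hx)) (hx i), ?_⟩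
  simp only [Pi.smul_apply, smul_eq_mul, ← Finset.mul_sum, inv_mul_cancel₀ hsum]

section ConvexHull

variable {E : Type*} [NormedAddCommGroup E] [InnerProductSpace ℝ E]

lemma closedBall_subset_of_forall_exists_inner_le [CompleteSpace E] {C : Set E} {r : ℝ}
    (hconv : Convex ℝ C) (hclosed : IsClosed C) (h : ∀ z, ∃ c ∈ C, ⟪c, z⟫ ≤ -r * ‖z‖) :
    Metric.closedBall 0 r ⊆ C := by
  intro p hp
  by_contra hpC
  obtain ⟨f, s, hps, hsC⟩ := geometric_hahn_banach_point_closed hconv hclosed hpC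
  obtain ⟨z, rfl⟩ := (InnerProductSpace.toDual ℝ E).surjective f
  simp only [InnerProductSpace.toDual_apply_apply] at hps hsC
  obtain ⟨c, hc, hcz⟩ := h z
  have hpr : ‖p‖ ≤ r := mem_closedBall_zero_iff.1 hp
  refine lt_irrefl (-r * ‖z‖) ?_
  calc -r * ‖z‖ ≤ -(‖z‖ * ‖p‖) := by
        linarith [mul_le_mul_of_nonneg_left hpr (norm_nonneg z)]
    _ ≤ ⟪z, p⟫ := neg_le_of_abs_le (abs_real_inner_le_norm z p)
    _ < ⟪z, c⟫ := hps.trans (hsC c hc)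
    _ = ⟪c, z⟫ := real_inner_comm c z
    _ ≤ -r * ‖z‖ := hcz

variable {ι : Type*} [Finite ι] {a : ι → E}

lemma iInf_inner_le_inner_of_mem_convexHull {p : E} (hp : p ∈ convexHull ℝ (Set.range a)) (z : E) :
    (⨅ i, ⟪a i, z⟫) ≤ ⟪p, z⟫ := by
  have hconv : Convex ℝ {q : E | (⨅ i, ⟪a i, z⟫) ≤ ⟪q, z⟫} :=
    convex_halfSpace_ge ((innerₗ E).flip z).isLinear _
  refine convexHull_min ?_ hconv hp
  rintro _ ⟨i, rfl⟩
  exact ciInf_le (Set.finite_range fun i ↦ ⟪a i, z⟫).bddBelow i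

lemma closedBall_subset_convexHull_range_of_iInf_inner_le [CompleteSpace E] [Nonempty ι] {r : ℝ}
    (h : ∀ z : E, ‖z‖ = 1 → (⨅ i, ⟪a i, z⟫) ≤ -r) :
    Metric.closedBall 0 r ⊆ convexHull ℝ (Set.range a) := by
  refine closedBall_subset_of_forall_exists_inner_le (convex_convexHull ℝ _)
    ((Set.finite_range a).isClosed_convexHull ℝ) fun z ↦ ?_
  obtain ⟨i, hi⟩ := exists_eq_ciInf_of_finite (f := fun i : ι ↦ ⟪a i, ‖z‖⁻¹ • z⟫)
  refine ⟨a i, subset_convexHull ℝ _ (Set.mem_range_self i), ?_⟩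
  rcases eq_or_ne z 0 with rfl | hz
  · simp
  · have hunit : ⟪a i, ‖z‖⁻¹ • z⟫ ≤ -r := hi.trans_le (h _ (norm_smul_inv_norm hz))
    rwa [real_inner_smul_right, inv_mul_le_iff₀' (norm_pos_iff.2 hz)] at hunit

end ConvexHull

section RestrictedWidth

variable {m n : ℕ} {a : Fin n → EuclideanSpace ℝ (Fin m)} {x : Fin n → ℝ}

lemma comb_eq_linearCombination_s14 : comb a = Fintype.linearCombination ℝ a := rfl

lemma comb_single_one (i : Fin n) : comb a (Pi.single i 1) = a i := by
  rw [comb_eq_linearCombination_s14, Fintype.linearCombination_apply_single, one_smul]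

lemma image_comb_stdSimplex : comb a '' stdSimplex ℝ (Fin n) = convexHull ℝ (Set.range a) := by
  rw [comb_eq_linearCombination_s14, ← convexHull_rangle_single_eq_stdSimplex,
    LinearMap.image_convexHull, ← Set.range_comp]
  exact congrArg _ (congrArg _ (funext comb_single_one))

lemma sum_pos_of_comb_ne_zero (hx : ∀ i, 0 ≤ x i) (hax : comb a x ≠ 0) : 0 < ∑ i, x i := by
  refine Fintype.sum_pos (lt_of_le_of_ne hx ?_)
  rintro rfl
  exact hax (map_zero (Fintype.linearCombination ℝ a))

lemma norm_comb_sub_comb_le_diam {u v : Fin n → ℝ} (hu : u ∈ stdSimplex ℝ (Fin n))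
    (hv : v ∈ stdSimplex ℝ (Fin n)) : ‖comb a u - comb a v‖ ≤ Metric.diam (Set.range a) := by
  have hbounded : Bornology.IsBounded (convexHull ℝ (Set.range a)) :=
    isBounded_convexHull.2 (Set.finite_range a).isBounded
  rw [← dist_eq_norm, ← convexHull_diam]
  exact Metric.dist_le_diam_of_mem hbounded (image_comb_stdSimplex.le (Set.mem_image_of_mem _ hu))
    (image_comb_stdSimplex.le (Set.mem_image_of_mem _ hv))

lemma le_phiAt (hax : comb a x ≠ 0) {lam : ℝ} (hlam : 0 < lam) {u v : Fin n → ℝ}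
    (hu : u ∈ stdSimplex ℝ (Fin n)) (hv : v ∈ stdSimplex ℝ (Fin n))
    (hsupp : ∀ i, 0 < u i → 0 < x i)
    (huv : comb a u - comb a v = (lam / ‖comb a x‖) • comb a x) : lam ≤ phiAt a x := by
  refine le_csSup ⟨Metric.diam (Set.range a), ?_⟩ ⟨hlam, u, hu, v, hv, hsupp, huv⟩
  rintro l ⟨hl, u', hu', v', hv', -, h⟩
  calc l = ‖(l / ‖comb a x‖) • comb a x‖ := by
        rw [norm_smul, norm_div, norm_norm, div_mul_cancel₀ _ (norm_ne_zero_iff.2 hax),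
          Real.norm_of_nonneg hl.le]
    _ = ‖comb a u' - comb a v'‖ := by rw [h]
    _ ≤ Metric.diam (Set.range a) := norm_comb_sub_comb_le_diam hu' hv'

lemma add_norm_div_sum_le_phiAt {r : ℝ} (hr : 0 ≤ r)
    (hball : Metric.closedBall 0 r ⊆ convexHull ℝ (Set.range a))
    (hx : ∀ i, 0 ≤ x i) (hax : comb a x ≠ 0) :
    r + ‖comb a x‖ / (∑ i, x i) ≤ phiAt a x := by
  have hnorm : 0 < ‖comb a x‖ := norm_pos_iff.2 hax
  have hsum : 0 < ∑ i, x i := sum_pos_of_comb_ne_zero hx hax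
  have hmem : (-(r / ‖comb a x‖)) • comb a x ∈ Metric.closedBall 0 r := by
    rw [mem_closedBall_zero_iff, norm_smul, norm_neg, norm_div, norm_norm,
      div_mul_cancel₀ _ hnorm.ne', Real.norm_of_nonneg hr]
  obtain ⟨v, hv, hcomb_v⟩ := image_comb_stdSimplex.ge (hball hmem)
  have hcomb_u : comb a ((∑ i, x i)⁻¹ • x) = (∑ i, x i)⁻¹ • comb a x :=
    map_smul (Fintype.linearCombination ℝ a) _ x
  have hcoeff : (∑ i, x i)⁻¹ - -(r / ‖comb a x‖) =
      (r + ‖comb a x‖ / (∑ i, x i)) / ‖comb a x‖ := by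
    field_simp
    ring
  refine le_phiAt hax (by positivity) (inv_sum_smul_mem_stdSimplex hx hsum.ne') hv
    (fun i hi ↦ pos_of_mul_pos_right hi (inv_nonneg.2 hsum.le)) ?_
  rw [hcomb_u, hcomb_v, ← sub_smul, hcoeff]

lemma le_phi {r : ℝ} (ha : ∃ i, a i ≠ 0)
    (h : ∀ x : Fin n → ℝ, (∀ i, 0 ≤ x i) → comb a x ≠ 0 → r ≤ phiAt a x) : r ≤ phi a := by
  obtain ⟨i, hi⟩ := ha
  refine le_csInf ⟨_, Pi.single i 1, (single_mem_stdSimplex ℝ i).1, ?_, rfl⟩ ?_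
  · rwa [comb_single_one]
  · rintro _ ⟨x, hx, hax, rfl⟩
    exact h x hx hax

end RestrictedWidth

theorem stmt14_general (m n : ℕ) (a : Fin n → EuclideanSpace ℝ (Fin m))
    (hA : ∃ i, a i ≠ 0) (h0 : 0 ∈ convexHull ℝ (Set.range a)) (ρ : ℝ)
    (hρ : IsGreatest
      {t : ℝ | ∃ z : EuclideanSpace ℝ (Fin m), ‖z‖ = 1 ∧ t = ⨅ i : Fin n, ⟪a i, z⟫} ρ) :
    (∀ x : Fin n → ℝ, (∀ i, 0 ≤ x i) → comb a x ≠ 0 →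
      |ρ| + ‖comb a x‖ / (∑ i, x i) ≤ phiAt a x) ∧
    |ρ| ≤ phi a := by
  have : Nonempty (Fin n) := hA.nonempty
  have hρ_nonpos : ρ ≤ 0 := by
    obtain ⟨z, -, rfl⟩ := hρ.1
    exact (iInf_inner_le_inner_of_mem_convexHull h0 z).trans_eq (inner_zero_left z)
  have hball : Metric.closedBall 0 |ρ| ⊆ convexHull ℝ (Set.range a) := by
    refine closedBall_subset_convexHull_range_of_iInf_inner_le fun z hz ↦ ?_
    rw [abs_of_nonpos hρ_nonpos, neg_neg]
    exact hρ.2 ⟨z, hz, rfl⟩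
  have hphiAt (x : Fin n → ℝ) (hx : ∀ i, 0 ≤ x i) (hax : comb a x ≠ 0) :
      |ρ| + ‖comb a x‖ / (∑ i, x i) ≤ phiAt a x :=
    add_norm_div_sum_le_phiAt (abs_nonneg ρ) hball hx hax
  refine ⟨hphiAt, le_phi hA fun x hx hax ↦ le_trans ?_ (hphiAt x hx hax)⟩
  exact le_add_of_nonneg_right (div_nonneg (norm_nonneg _) (Finset.sum_nonneg fun i _ ↦ hx i))

/-- if `A` is nonzero and `0 ∈ int(conv(A))`, then for every `x ≥ 0` with
`Ax ≠ 0`, `φ(A, x) ≥ |ρ(A)| + ‖Ax‖/‖x‖₁`, and consequently `φ(A) ≥ |ρ(A)|`. -/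
theorem stmt14 (m n : ℕ) (hn : 0 < n) (a : Fin n → EuclideanSpace ℝ (Fin m))
    (hA : ∃ i, a i ≠ 0)
    (h0 : (0 : EuclideanSpace ℝ (Fin m)) ∈ interior (convexHull ℝ (Set.range a)))
    (ρ : ℝ)
    (hρ : IsGreatest
      {t : ℝ | ∃ z : EuclideanSpace ℝ (Fin m), ‖z‖ = 1 ∧ t = ⨅ i : Fin n, ⟪a i, z⟫} ρ) :
    (∀ x : Fin n → ℝ, (∀ i, 0 ≤ x i) → comb a x ≠ 0 →
      |ρ| + ‖comb a x‖ / (∑ i, x i) ≤ phiAt a x) ∧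
    |ρ| ≤ phi a :=
  stmt14_general m n a hA (interior_subset h0) ρ hρ
end
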